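/- arXiv:2007.07826 — 2 statements merged into one kernel-verified Lean document; each statement's English description precedes it below -/
import Mathlib

section
/- Let d be a differential on a polarized bigraded Hodge–Lefschetz structure (H, N₁, N₂, ψ). Then: (i) the codifferential d* is adjoint to d with respect to φ, i.e., φ(x, d*y) = φ(dx, y) for all x, y ∈ H; (ii) the Laplacian Δ is symmetric with respect to φ, i.e., φ(Δx, y) = φ(x, Δy) for all x, y; (iii) for every pair (a, b), ker(d) ∩ H_{a,b} = (ker(Δ) ∩ H_{a,b}) ⊕ (im(d) ∩ H_{a,b}), and this direct sum decomposition is orthogonal with respect to φ. -/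
namespace HLS

variable {H : Type} [AddCommGroup H] [Module ℝ H]

/-- The primitive part `P_{a,b} = H_{a,b} ∩ ker(N₁^{a+1}) ∩ ker(N₂^{b+1})`, for `a, b ≥ 0`. -/
def prim (Hgr : ℤ → ℤ → Submodule ℝ H) (N₁ N₂ : H →ₗ[ℝ] H) (a b : ℕ) : Submodule ℝ H :=
  Hgr (a : ℤ) (b : ℤ) ⊓ LinearMap.ker (N₁ ^ (a + 1)) ⊓ LinearMap.ker (N₂ ^ (b + 1))

/-- A bigraded Hodge–Lefschetz structure: a finite-dimensional real vector space `H`,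
a direct sum decomposition `H = ⨁_{(a,b)} H_{a,b}`, and commuting operators `N₁, N₂` of
bidegrees `(-2,0)` and `(0,-2)` with `N₁^a : H_{a,b} → H_{-a,b}` and
`N₂^b : H_{a,b} → H_{a,-b}` isomorphisms for `a ≥ 0`, resp. `b ≥ 0`. -/
structure IsHL (Hgr : ℤ → ℤ → Submodule ℝ H) (N₁ N₂ : H →ₗ[ℝ] H) : Prop where
  findim : FiniteDimensional ℝ H
  internal : DirectSum.IsInternal (fun p : ℤ × ℤ => Hgr p.1 p.2)
  mapN₁ : ∀ a b : ℤ, ∀ x ∈ Hgr a b, N₁ x ∈ Hgr (a - 2) b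
  mapN₂ : ∀ a b : ℤ, ∀ x ∈ Hgr a b, N₂ x ∈ Hgr a (b - 2)
  comm : N₁ ∘ₗ N₂ = N₂ ∘ₗ N₁
  bijN₁ : ∀ (a : ℕ) (b : ℤ),
    Submodule.map (N₁ ^ a) (Hgr (a : ℤ) b) = Hgr (-(a : ℤ)) b ∧
    ∀ x ∈ Hgr (a : ℤ) b, (N₁ ^ a) x = 0 → x = 0
  bijN₂ : ∀ (a : ℤ) (b : ℕ),
    Submodule.map (N₂ ^ b) (Hgr a (b : ℤ)) = Hgr a (-(b : ℤ)) ∧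
    ∀ x ∈ Hgr a (b : ℤ), (N₂ ^ b) x = 0 → x = 0

/-- A polarization on a bigraded Hodge–Lefschetz structure. -/
structure IsPolarization (Hgr : ℤ → ℤ → Submodule ℝ H) (N₁ N₂ : H →ₗ[ℝ] H)
    (ψ : H →ₗ[ℝ] H →ₗ[ℝ] ℝ) : Prop where
  orth : ∀ a b a' b' : ℤ, ¬ (a + a' = 0 ∧ b + b' = 0) →
    ∀ x ∈ Hgr a b, ∀ y ∈ Hgr a' b', ψ x y = 0
  primSymm : ∀ a b : ℕ, ∀ x ∈ prim Hgr N₁ N₂ a b, ∀ y ∈ prim Hgr N₁ N₂ a b,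
    ψ x (((N₁ ^ a) ∘ₗ (N₂ ^ b)) y) = ψ y (((N₁ ^ a) ∘ₗ (N₂ ^ b)) x)
  primPosDef : ∀ a b : ℕ, ∀ x ∈ prim Hgr N₁ N₂ a b, x ≠ 0 →
    0 < ψ x (((N₁ ^ a) ∘ₗ (N₂ ^ b)) x)
  skew₁ : ∀ x y : H, ψ (N₁ x) y + ψ x (N₁ y) = 0
  skew₂ : ∀ x y : H, ψ (N₂ x) y + ψ x (N₂ y) = 0

/-- The defining property of the operator `w`:
`w(N₁^r N₂^s x) = (-1)^{r+s} (r!/(a-r)!)(s!/(b-s)!) N₁^{a-r} N₂^{b-s} x` for `x ∈ P_{a,b}`,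
`r ≤ a`, `s ≤ b`, and `w(N₁^r N₂^s x) = 0` otherwise.  (By the primitive decomposition this
determines `w` uniquely.) -/
def IsW (Hgr : ℤ → ℤ → Submodule ℝ H) (N₁ N₂ : H →ₗ[ℝ] H) (w : H →ₗ[ℝ] H) : Prop :=
  ∀ a b r s : ℕ, ∀ x ∈ prim Hgr N₁ N₂ a b,
    w (((N₁ ^ r) ∘ₗ (N₂ ^ s)) x) =
      if r ≤ a ∧ s ≤ b then
        ((-1 : ℝ) ^ (r + s) * ((r.factorial : ℝ) / ((a - r).factorial : ℝ)) *
          ((s.factorial : ℝ) / ((b - s).factorial : ℝ))) •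
          (((N₁ ^ (a - r)) ∘ₗ (N₂ ^ (b - s))) x)
      else 0

/-- A differential on a polarized bigraded Hodge–Lefschetz structure. -/
structure IsDifferential (Hgr : ℤ → ℤ → Submodule ℝ H) (N₁ N₂ : H →ₗ[ℝ] H)
    (ψ : H →ₗ[ℝ] H →ₗ[ℝ] ℝ) (dd : H →ₗ[ℝ] H) : Prop where
  mem : ∀ a b : ℤ, ∀ x ∈ Hgr a b, dd x ∈ Hgr (a - 1) (b - 1)
  sq : ∀ x, dd (dd x) = 0
  commN₁ : dd ∘ₗ N₁ = N₁ ∘ₗ dd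
  commN₂ : dd ∘ₗ N₂ = N₂ ∘ₗ dd
  skew : ∀ x y : H, ψ (dd x) y + ψ x (dd y) = 0

/-- The codifferential `d* = - w⁻¹ ∘ d ∘ w`. -/
def dstar (w winv dd : H →ₗ[ℝ] H) : H →ₗ[ℝ] H := -(winv ∘ₗ dd ∘ₗ w)

/-- The Laplacian `Δ = d d* + d* d`. -/
def lap (w winv dd : H →ₗ[ℝ] H) : H →ₗ[ℝ] H :=
  dd ∘ₗ dstar w winv dd + dstar w winv dd ∘ₗ dd

end HLS

/-!
The Lefschetz decomposition for `N₁` and `N₂` together writes `H` as the sum of the pieces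
`N₁ ^ r N₂ ^ s P_{a,b}`. They are pairwise `φ`-orthogonal, and the signs in `w` are chosen so that
on each of them `φ` is a positive multiple of the polarization form of `P_{a,b}`; hence `φ` is an
inner product. As `d` is `ψ`-skew, `d*` is its `φ`-adjoint, and the rest is finite-dimensional
Hodge theory: `φ(x, Δx) = φ(d* x, d* x) + φ(dx, dx)` gives `ker Δ = ker d ∩ ker d*`, and the
`φ`-orthogonal complement of `im d ∩ H_{a,b}` in `ker d ∩ H_{a,b}` is killed by `d*` because
`d d*` preserves `H_{a,b}`.
-/

namespace HLS

section BilinearForm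

open LinearMap (BilinForm IsAdjointPair)

variable {R M : Type*} [CommRing R] [AddCommGroup M] [Module R M] {B : BilinForm R M}

theorem isAdjointPair_pow {f g : Module.End R M} (h : IsAdjointPair B B f g) (n : ℕ) :
    IsAdjointPair B B (f ^ n : Module.End R M) (g ^ n : Module.End R M) := by
  induction n with
  | zero => exact LinearMap.isAdjointPair_one
  | succ n ih =>
    rw [pow_succ f, pow_succ' g]
    exact ih.mul h

theorem isAdjointPair_swap {f g : Module.End R M} (hB : B.IsSymm) (h : IsAdjointPair B B f g) :
    IsAdjointPair B B g f := fun x y => by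
  rw [hB.eq, ← h, hB.eq]

variable {ι : Type*} {P : ι → Submodule R M}

theorem isSymm_of_iSup_eq_top (htop : ⨆ i, P i = ⊤)
    (horth : ∀ i j, i ≠ j → ∀ x ∈ P i, ∀ y ∈ P j, B x y = 0)
    (hsymm : ∀ i, ∀ x ∈ P i, ∀ y ∈ P i, B x y = B y x) : B.IsSymm := by
  refine ⟨fun x y => ?_⟩
  have hx : x ∈ ⨆ i, P i := htop ▸ Submodule.mem_top
  have hy : y ∈ ⨆ i, P i := htop ▸ Submodule.mem_top
  induction hx using Submodule.iSup_induction' with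
  | zero => simp
  | add x₁ x₂ _ _ h₁ h₂ => simp [h₁, h₂]
  | mem i x hx =>
    induction hy using Submodule.iSup_induction' with
    | zero => simp
    | add y₁ y₂ _ _ h₁ h₂ => simp [h₁, h₂]
    | mem j y hy =>
      obtain rfl | hij := eq_or_ne i j
      · exact hsymm i x hx y hy
      · rw [horth i j hij x hx y hy, horth j i hij.symm y hy x hx]

theorem apply_self_pos_of_iSup_eq_top [PartialOrder R] [IsOrderedCancelAddMonoid R]
    (htop : ⨆ i, P i = ⊤)
    (horth : ∀ i j, i ≠ j → ∀ x ∈ P i, ∀ y ∈ P j, B x y = 0)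
    (hpos : ∀ i, ∀ x ∈ P i, x ≠ 0 → 0 < B x x) {x : M} (hx : x ≠ 0) : 0 < B x x := by
  have hmem : x ∈ ⨆ i, P i := htop ▸ Submodule.mem_top
  obtain ⟨f, hf, rfl⟩ := (Submodule.mem_iSup_iff_exists_finsupp _ _).1 hmem
  have hpythagoras : B (f.sum fun _ x => x) (f.sum fun _ x => x) =
      ∑ i ∈ f.support, B (f i) (f i) := by
    simp only [Finsupp.sum, map_sum, LinearMap.sum_apply]
    exact Finset.sum_congr rfl fun i hi => Finset.sum_eq_single_of_mem i hi fun j _ hji =>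
      horth j i hji _ (hf j) _ (hf i)
  have hsupport : f.support.Nonempty := by
    rw [Finsupp.support_nonempty_iff]
    rintro rfl
    exact hx Finsupp.sum_zero_index
  rw [hpythagoras]
  exact Finset.sum_pos (fun i hi => hpos i _ (hf i) (Finsupp.mem_support_iff.1 hi)) hsupport

end BilinearForm

section HodgeDecomposition

open LinearMap (BilinForm IsAdjointPair)

section OrderedRing

variable {R M : Type*} [CommRing R] [AddCommGroup M] [Module R M] {B : BilinForm R M}
  {d δ : Module.End R M}

theorem isSelfAdjoint_laplacian (hB : B.IsSymm) (hadj : IsAdjointPair B B d δ) :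
    B.IsSelfAdjoint (d ∘ₗ δ + δ ∘ₗ d) :=
  have hadj' := isAdjointPair_swap hB hadj
  (hadj.mul hadj').add (hadj'.mul hadj)

variable [PartialOrder R]

theorem eq_zero_of_apply_self_eq_zero (hpos : ∀ x, x ≠ 0 → 0 < B x x) {x : M}
    (hx : B x x = 0) : x = 0 := by
  by_contra hne
  exact (hpos x hne).ne' hx

variable [IsOrderedAddMonoid R]

theorem ker_laplacian (hB : B.IsSymm) (hpos : ∀ x, x ≠ 0 → 0 < B x x)
    (hadj : IsAdjointPair B B d δ) :
    LinearMap.ker (d ∘ₗ δ + δ ∘ₗ d) = LinearMap.ker d ⊓ LinearMap.ker δ := by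
  have hnonneg (x : M) : 0 ≤ B x x := by
    obtain rfl | hx := eq_or_ne x 0
    · simp
    · exact (hpos x hx).le
  ext x
  simp only [LinearMap.mem_ker, Submodule.mem_inf, LinearMap.add_apply, LinearMap.comp_apply]
  refine ⟨fun hx => ?_, fun ⟨hdx, hδx⟩ => by simp [hdx, hδx]⟩
  have henergy : B (δ x) (δ x) + B (d x) (d x) = 0 := by
    rw [isAdjointPair_swap hB hadj, hadj, ← map_add, hx, map_zero]
  obtain ⟨hδx, hdx⟩ := (add_eq_zero_iff_of_nonneg (hnonneg _) (hnonneg _)).1 henergy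
  exact ⟨eq_zero_of_apply_self_eq_zero hpos hdx, eq_zero_of_apply_self_eq_zero hpos hδx⟩

theorem apply_eq_zero_of_mem_ker_laplacian_of_mem_range (hB : B.IsSymm)
    (hpos : ∀ x, x ≠ 0 → 0 < B x x) (hadj : IsAdjointPair B B d δ) {x y : M}
    (hx : x ∈ LinearMap.ker (d ∘ₗ δ + δ ∘ₗ d)) (hy : y ∈ LinearMap.range d) : B x y = 0 := by
  rw [ker_laplacian hB hpos hadj] at hx
  obtain ⟨z, rfl⟩ := hy
  rw [← isAdjointPair_swap hB hadj, LinearMap.mem_ker.1 hx.2, map_zero, LinearMap.zero_apply]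

theorem disjoint_ker_laplacian_range (hB : B.IsSymm) (hpos : ∀ x, x ≠ 0 → 0 < B x x)
    (hadj : IsAdjointPair B B d δ) :
    Disjoint (LinearMap.ker (d ∘ₗ δ + δ ∘ₗ d)) (LinearMap.range d) :=
  Submodule.disjoint_def.2 fun _ hker hrange => eq_zero_of_apply_self_eq_zero hpos
    (apply_eq_zero_of_mem_ker_laplacian_of_mem_range hB hpos hadj hker hrange)

end OrderedRing

section OrderedField

variable {K V : Type*} [Field K] [PartialOrder K] [AddCommGroup V] [Module K V]
  [FiniteDimensional K V] {B : BilinForm K V}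

theorem isCompl_orthogonal_of_apply_self_pos (hB : B.IsSymm) (hpos : ∀ x, x ≠ 0 → 0 < B x x)
    (W : Submodule K V) : IsCompl W (B.orthogonal W) := by
  have hrestrict : (B.restrict W).Nondegenerate := by
    constructor <;> exact fun x hx => Subtype.ext (eq_zero_of_apply_self_eq_zero hpos (hx x))
  exact BilinForm.isCompl_orthogonal_of_restrict_nondegenerate hB.isRefl hrestrict

variable [IsOrderedAddMonoid K] {d δ : Module.End K V}

theorem ker_inf_eq_ker_laplacian_inf_sup_range_inf (hB : B.IsSymm)
    (hpos : ∀ x, x ≠ 0 → 0 < B x x) (hadj : IsAdjointPair B B d δ) (hsq : ∀ x, d (d x) = 0)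
    {W : Submodule K V} (hW : ∀ x ∈ W, d (δ x) ∈ W) :
    LinearMap.ker d ⊓ W =
      (LinearMap.ker (d ∘ₗ δ + δ ∘ₗ d) ⊓ W) ⊔ (LinearMap.range d ⊓ W) := by
  have hrange : LinearMap.range d ≤ LinearMap.ker d := LinearMap.range_le_iff_comap.2 <| by
    ext x; simp [hsq]
  apply le_antisymm
  · intro x hx
    have hcompl := isCompl_orthogonal_of_apply_self_pos hB hpos (LinearMap.range d ⊓ W)
    obtain ⟨y, hy, h, hh, rfl⟩ :=
      Submodule.mem_sup.1 (hcompl.sup_eq_top ▸ Submodule.mem_top : x ∈ _)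
    have hclosed : h ∈ LinearMap.ker d ⊓ W :=
      (Submodule.add_mem_iff_right _ (inf_le_inf_right W hrange hy)).1 hx
    have hδh : δ h = 0 := by
      refine eq_zero_of_apply_self_eq_zero hpos ?_
      rw [← hadj]
      exact hh _ ⟨⟨_, rfl⟩, hW h hclosed.2⟩
    rw [sup_comm, ker_laplacian hB hpos hadj]
    exact Submodule.add_mem_sup hy ⟨⟨hclosed.1, hδh⟩, hclosed.2⟩
  · rw [ker_laplacian hB hpos hadj]
    exact sup_le (inf_le_inf_right W inf_le_left) (inf_le_inf_right W hrange)

end OrderedField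

end HodgeDecomposition

section LefschetzDecomposition

variable {R M : Type*} [Ring R] [AddCommGroup M] [Module R M]

theorem pow_apply_mem_of_forall_apply_mem {ι : Type*} [AddCommGroup ι] {V : ι → Submodule R M}
    {N : Module.End R M} {e : ι} (hN : ∀ k, ∀ x ∈ V k, N x ∈ V (k - e)) (n : ℕ) {k : ι} {x : M}
    (hx : x ∈ V k) : (N ^ n) x ∈ V (k - n • e) := by
  induction n with
  | zero => simpa using hx
  | succ n ih =>
    rw [pow_succ', Module.End.mul_apply, succ_nsmul, ← sub_sub]
    exact hN _ _ ih

/-- The primitive part in degree `a` of a `ℤ`-graded module with an endomorphism `N` of degree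
`-2`: the homogeneous elements `x` of degree `a` with `N ^ (a + 1) x = 0`. -/
def gradedPrim (V : ℤ → Submodule R M) (N : Module.End R M) (a : ℕ) : Submodule R M :=
  V a ⊓ LinearMap.ker (N ^ (a + 1))

variable {V : ℤ → Submodule R M} {N : Module.End R M}

-- If `N ^ (k + 1) x = N ^ (k + 2) y`, then `x - N y` is primitive.
theorem le_gradedPrim_sup_map (hN : ∀ k, ∀ x ∈ V k, N x ∈ V (k - 2))
    (hsurj : ∀ a : ℕ, V (-a) ≤ (V a).map (N ^ a)) (k : ℕ) :
    V k ≤ gradedPrim V N k ⊔ (V (k + 2 : ℕ)).map N := by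
  intro x hx
  have hlow : (N ^ (k + 1)) x ∈ V (-(k + 2 : ℕ)) := by
    convert pow_apply_mem_of_forall_apply_mem hN (k + 1) hx using 2
    push_cast [nsmul_eq_mul]
    ring
  obtain ⟨y, hy, hyx⟩ := hsurj _ hlow
  have hNy : N y ∈ V k := by
    convert hN _ _ hy using 2
    push_cast
    ring
  have hprim : x - N y ∈ gradedPrim V N k := by
    refine ⟨Submodule.sub_mem _ hx hNy, ?_⟩
    rw [SetLike.mem_coe, LinearMap.mem_ker, map_sub, ← Module.End.mul_apply, ← pow_succ, hyx,
      sub_self]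
  exact Submodule.mem_sup.2 ⟨_, hprim, _, ⟨y, hy, rfl⟩, sub_add_cancel _ _⟩

theorem le_iSup_map_pow_gradedPrim_of_nat (hN : ∀ k, ∀ x ∈ V k, N x ∈ V (k - 2))
    (hsurj : ∀ a : ℕ, V (-a) ≤ (V a).map (N ^ a)) (hbdd : BddAbove {k | V k ≠ ⊥}) (k : ℕ) :
    V k ≤ ⨆ r : ℕ, (gradedPrim V N (k + 2 * r)).map (N ^ r) := by
  obtain ⟨B, hB⟩ := hbdd
  obtain ⟨n, hn⟩ : ∃ n : ℕ, B < k + n := ⟨(B - k + 1).toNat, by omega⟩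
  induction n generalizing k with
  | zero =>
    have hbot : V k = ⊥ := by
      by_contra hne
      have : (k : ℤ) ≤ B := hB hne
      omega
    exact hbot ▸ bot_le
  | succ n ih =>
    have hstep := ih (k + 2) (by push_cast at hn ⊢; omega)
    refine (le_gradedPrim_sup_map hN hsurj k).trans (sup_le ?_ ?_)
    · exact le_iSup_of_le 0 (by simp [Module.End.one_eq_id])
    · refine (Submodule.map_mono hstep).trans ?_
      rw [Submodule.map_iSup]
      refine iSup_le fun r => le_iSup_of_le (r + 1) ?_
      rw [← Submodule.map_comp, ← Module.End.mul_eq_comp, ← pow_succ',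
        show k + 2 + 2 * r = k + 2 * (r + 1) by ring]

theorem le_iSup_map_pow_gradedPrim (hN : ∀ k, ∀ x ∈ V k, N x ∈ V (k - 2))
    (hsurj : ∀ a : ℕ, V (-a) ≤ (V a).map (N ^ a)) (hbdd : BddAbove {k | V k ≠ ⊥}) (k : ℤ) :
    V k ≤ ⨆ (a : ℕ) (r : ℕ) (_ : (a : ℤ) - 2 * r = k), (gradedPrim V N a).map (N ^ r) := by
  obtain ⟨m, rfl | rfl⟩ := k.eq_nat_or_neg
  · refine (le_iSup_map_pow_gradedPrim_of_nat hN hsurj hbdd m).trans (iSup_le fun r => ?_)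
    exact le_iSup_of_le (m + 2 * r) <| le_iSup₂_of_le r (by push_cast; ring) le_rfl
  · refine (hsurj m).trans ((Submodule.map_mono
      (le_iSup_map_pow_gradedPrim_of_nat hN hsurj hbdd m)).trans ?_)
    rw [Submodule.map_iSup]
    refine iSup_le fun r => le_iSup_of_le (m + 2 * r) <|
      le_iSup₂_of_le (m + r) (by push_cast; ring) ?_
    rw [← Submodule.map_comp, ← Module.End.mul_eq_comp, ← pow_add]

end LefschetzDecomposition

section Bigraded

variable {H : Type} [AddCommGroup H] [Module ℝ H] {Hgr : ℤ → ℤ → Submodule ℝ H}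
  {N₁ N₂ : H →ₗ[ℝ] H} {ψ : H →ₗ[ℝ] H →ₗ[ℝ] ℝ} {w winv : H →ₗ[ℝ] H} {a b r s : ℕ}

theorem IsHL.monomial_apply_mem (hHL : IsHL Hgr N₁ N₂) {k l : ℤ} {x : H} (hx : x ∈ Hgr k l)
    (r s : ℕ) : (N₁ ^ r * N₂ ^ s) x ∈ Hgr (k - 2 * r) (l - 2 * s) := by
  have hN₂ : (N₂ ^ s) x ∈ Hgr k (l - s • 2) :=
    pow_apply_mem_of_forall_apply_mem (V := fun l => Hgr k l) (fun _ => hHL.mapN₂ k _) s hx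
  have hN₁ : (N₁ ^ r) ((N₂ ^ s) x) ∈ Hgr (k - r • 2) (l - s • 2) :=
    pow_apply_mem_of_forall_apply_mem (V := fun k => Hgr k _) (fun _ => hHL.mapN₁ _ _) r hN₂
  rw [Module.End.mul_apply]
  simpa only [nsmul_eq_mul, mul_comm] using hN₁

theorem IsHL.commute (hHL : IsHL Hgr N₁ N₂) : Commute (N₁ : Module.End ℝ H) N₂ := hHL.comm

theorem IsHL.finite_setOf_ne_bot (hHL : IsHL Hgr N₁ N₂) :
    {p : ℤ × ℤ | Hgr p.1 p.2 ≠ ⊥}.Finite :=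
  have := hHL.findim
  WellFoundedGT.finite_ne_bot_of_iSupIndep hHL.internal.submodule_iSupIndep

theorem IsHL.bddAbove_fst (hHL : IsHL Hgr N₁ N₂) (l : ℤ) : BddAbove {k | Hgr k l ≠ ⊥} :=
  (hHL.finite_setOf_ne_bot.preimage (f := fun k => (k, l))
    (Prod.mk_left_injective l).injOn).bddAbove

theorem IsHL.bddAbove_snd (hHL : IsHL Hgr N₁ N₂) (k : ℤ) : BddAbove {l | Hgr k l ≠ ⊥} :=
  (hHL.finite_setOf_ne_bot.preimage (f := fun l => (k, l))
    (Prod.mk_right_injective k).injOn).bddAbove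

/-- The summand `N₁ ^ r N₂ ^ s P_{a,b}` of the Lefschetz decomposition, indexed by
`((a, b), (r, s))`. It is zero unless `r ≤ a` and `s ≤ b`. -/
def lefschetzPiece (Hgr : ℤ → ℤ → Submodule ℝ H) (N₁ N₂ : Module.End ℝ H) :
    (ℕ × ℕ) × (ℕ × ℕ) → Submodule ℝ H
  | ((a, b), (r, s)) => (prim Hgr N₁ N₂ a b).map (N₁ ^ r * N₂ ^ s)

theorem IsHL.gradedPrim_le_iSup (hHL : IsHL Hgr N₁ N₂) (a : ℕ) (l : ℤ) :
    gradedPrim (fun k => Hgr k l) N₁ a ≤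
      ⨆ (b : ℕ) (s : ℕ) (_ : (b : ℤ) - 2 * s = l), (prim Hgr N₁ N₂ a b).map (N₂ ^ s) := by
  refine le_iSup_map_pow_gradedPrim (V := fun l => gradedPrim (fun k => Hgr k l) N₁ a) (N := N₂)
    ?_ ?_ ?_ l
  · rintro l x ⟨hx, hx₁⟩
    refine ⟨hHL.mapN₂ _ _ _ hx, ?_⟩
    rw [SetLike.mem_coe, LinearMap.mem_ker, ← Module.End.mul_apply,
      (hHL.commute.pow_left (a + 1)).eq, Module.End.mul_apply, LinearMap.mem_ker.1 hx₁, map_zero]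
  · rintro b y ⟨hy, hy₁⟩
    simp only [← (hHL.bijN₂ a b).1] at hy
    obtain ⟨z, hz, rfl⟩ := hy
    refine ⟨z, ⟨hz, (hHL.bijN₂ _ b).2 _ (hHL.monomial_apply_mem hz (a + 1) 0) ?_⟩, rfl⟩
    rw [← Module.End.mul_apply, (hHL.commute.pow_pow _ _).symm.eq]
    exact hy₁
  · refine (hHL.bddAbove_snd a).mono fun l => mt fun hbot => ?_
    exact (Submodule.eq_bot_iff _).2 fun x hx => (Submodule.eq_bot_iff _).1 hbot x hx.1

theorem IsHL.le_iSup_lefschetzPiece (hHL : IsHL Hgr N₁ N₂) (k l : ℤ) :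
    Hgr k l ≤ ⨆ (a : ℕ) (r : ℕ) (_ : (a : ℤ) - 2 * r = k) (b : ℕ) (s : ℕ)
      (_ : (b : ℤ) - 2 * s = l), lefschetzPiece Hgr N₁ N₂ ((a, b), (r, s)) := by
  refine (le_iSup_map_pow_gradedPrim (V := fun k => Hgr k l) (fun k => hHL.mapN₁ k l)
    (fun a => (hHL.bijN₁ a l).1.ge) (hHL.bddAbove_fst l) k).trans ?_
  refine iSup_mono fun a => iSup₂_mono fun r _ => ?_
  refine (Submodule.map_mono (hHL.gradedPrim_le_iSup a l)).trans ?_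
  simp only [Submodule.map_iSup, ← Submodule.map_comp]
  exact le_rfl

theorem IsHL.iSup_lefschetzPiece_eq_top (hHL : IsHL Hgr N₁ N₂) :
    ⨆ i, lefschetzPiece Hgr N₁ N₂ i = ⊤ := by
  rw [eq_top_iff, ← hHL.internal.submodule_iSup_eq_top]
  refine iSup_le fun p => (hHL.le_iSup_lefschetzPiece p.1 p.2).trans ?_
  exact iSup_le fun a => iSup₂_le fun r _ => iSup_le fun b => iSup₂_le fun s _ =>
    le_iSup (lefschetzPiece Hgr N₁ N₂) ((a, b), (r, s))

theorem IsHL.monomial_apply_prim_eq_zero (hHL : IsHL Hgr N₁ N₂) {p : H}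
    (hp : p ∈ prim Hgr N₁ N₂ a b) (h : ¬(r ≤ a ∧ s ≤ b)) : (N₁ ^ r * N₂ ^ s) p = 0 := by
  obtain ⟨⟨-, hp₁⟩, hp₂⟩ := hp
  obtain hr | hs : a + 1 ≤ r ∨ b + 1 ≤ s := by omega
  · rw [(hHL.commute.pow_pow r s).eq, Module.End.mul_apply,
      Module.End.pow_map_zero_of_le hr hp₁, map_zero]
  · rw [Module.End.mul_apply, Module.End.pow_map_zero_of_le hs hp₂, map_zero]

theorem IsHL.monomial_mul_monomial (hHL : IsHL Hgr N₁ N₂) (r s m n : ℕ) :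
    (N₁ ^ r * N₂ ^ s : Module.End ℝ H) * (N₁ ^ m * N₂ ^ n) = N₁ ^ (r + m) * N₂ ^ (s + n) := by
  rw [(hHL.commute.symm.pow_pow s m).mul_mul_mul_comm, pow_add, pow_add]

theorem psi_monomial_apply (hHL : IsHL Hgr N₁ N₂) (hψ : IsPolarization Hgr N₁ N₂ ψ)
    (r s : ℕ) (x y : H) :
    ψ ((N₁ ^ r * N₂ ^ s) x) y = (-1) ^ (r + s) * ψ x ((N₁ ^ r * N₂ ^ s) y) := by
  have hN₁ : LinearMap.IsAdjointPair ψ ψ N₁ ((-1 : ℝ) • N₁ : Module.End ℝ H) := fun x y => by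
    simpa using eq_neg_of_add_eq_zero_left (hψ.skew₁ x y)
  have hN₂ : LinearMap.IsAdjointPair ψ ψ N₂ ((-1 : ℝ) • N₂ : Module.End ℝ H) := fun x y => by
    simpa using eq_neg_of_add_eq_zero_left (hψ.skew₂ x y)
  rw [(isAdjointPair_pow hN₁ r).mul (isAdjointPair_pow hN₂ s), smul_pow, smul_pow,
    smul_mul_smul_comm, ← pow_add, add_comm s r, (hHL.commute.pow_pow r s).symm.eq,
    LinearMap.smul_apply, map_smul, smul_eq_mul]

theorem eq_of_psi_prim_ne_zero (hHL : IsHL Hgr N₁ N₂) (hψ : IsPolarization Hgr N₁ N₂ ψ)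
    {a' b' m n : ℕ} {p q : H} (hp : p ∈ prim Hgr N₁ N₂ a b) (hq : q ∈ prim Hgr N₁ N₂ a' b')
    (hne : ψ p ((N₁ ^ m * N₂ ^ n) q) ≠ 0) : m = a ∧ m = a' ∧ n = b ∧ n = b' := by
  have hmoved : ψ ((N₁ ^ m * N₂ ^ n) p) q ≠ 0 := by
    rw [psi_monomial_apply hHL hψ]
    exact mul_ne_zero (pow_ne_zero _ (by norm_num)) hne
  have hab : m ≤ a ∧ n ≤ b := by
    by_contra h
    exact hmoved (by rw [hHL.monomial_apply_prim_eq_zero hp h, map_zero, LinearMap.zero_apply])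
  have hab' : m ≤ a' ∧ n ≤ b' := by
    by_contra h
    exact hne (by rw [hHL.monomial_apply_prim_eq_zero hq h, map_zero])
  have hdeg : (a : ℤ) + (a' - 2 * m) = 0 ∧ (b : ℤ) + (b' - 2 * n) = 0 := by
    by_contra h
    exact hne (hψ.orth _ _ _ _ h _ hp.1.1 _ (hHL.monomial_apply_mem hq.1.1 m n))
  omega

/-- The absolute value `(r! / (a - r)!) (s! / (b - s)!)` of the coefficient of
`N₁ ^ (a - r) N₂ ^ (b - s) x` in `w (N₁ ^ r N₂ ^ s x)`, for `x ∈ P_{a,b}`. -/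
noncomputable def weylCoeff (a b r s : ℕ) : ℝ :=
  (r.factorial / (a - r).factorial) * (s.factorial / (b - s).factorial)

theorem weylCoeff_pos (a b r s : ℕ) : 0 < weylCoeff a b r s := by
  unfold weylCoeff
  positivity

theorem IsW.apply_monomial (hw : IsW Hgr N₁ N₂ w) (hrs : r ≤ a ∧ s ≤ b) {p : H}
    (hp : p ∈ prim Hgr N₁ N₂ a b) :
    w ((N₁ ^ r * N₂ ^ s) p) =
      ((-1) ^ (r + s) * weylCoeff a b r s) • (N₁ ^ (a - r) * N₂ ^ (b - s)) p := by
  have h := hw a b r s p hp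
  rw [if_pos hrs] at h
  rw [weylCoeff, ← mul_assoc]
  exact h

/-- The bilinear form `φ(x, y) = ψ(x, w y)`. -/
def hodgeForm (ψ : H →ₗ[ℝ] H →ₗ[ℝ] ℝ) (w : H →ₗ[ℝ] H) : LinearMap.BilinForm ℝ H :=
  ψ.compl₂ w

theorem hodgeForm_monomial (hHL : IsHL Hgr N₁ N₂) (hψ : IsPolarization Hgr N₁ N₂ ψ)
    (hw : IsW Hgr N₁ N₂ w) {m n : ℕ} (hrs : r ≤ a ∧ s ≤ b) (p : H) {q : H}
    (hq : q ∈ prim Hgr N₁ N₂ a b) :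
    hodgeForm ψ w ((N₁ ^ m * N₂ ^ n) p) ((N₁ ^ r * N₂ ^ s) q) =
      (-1) ^ (m + n + (r + s)) * weylCoeff a b r s *
        ψ p ((N₁ ^ (m + (a - r)) * N₂ ^ (n + (b - s))) q) := by
  rw [hodgeForm, LinearMap.compl₂_apply, psi_monomial_apply hHL hψ, hw.apply_monomial hrs hq,
    map_smul, map_smul, ← Module.End.mul_apply, hHL.monomial_mul_monomial, smul_eq_mul, pow_add]
  ring

theorem hodgeForm_monomial_self (hHL : IsHL Hgr N₁ N₂) (hψ : IsPolarization Hgr N₁ N₂ ψ)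
    (hw : IsW Hgr N₁ N₂ w) (hrs : r ≤ a ∧ s ≤ b) (p : H) {q : H}
    (hq : q ∈ prim Hgr N₁ N₂ a b) :
    hodgeForm ψ w ((N₁ ^ r * N₂ ^ s) p) ((N₁ ^ r * N₂ ^ s) q) =
      weylCoeff a b r s * ψ p ((N₁ ^ a * N₂ ^ b) q) := by
  rw [hodgeForm_monomial hHL hψ hw hrs p hq, (Even.add_self (r + s)).neg_one_pow, one_mul,
    Nat.add_sub_cancel' hrs.1, Nat.add_sub_cancel' hrs.2]

theorem hodgeForm_eq_zero_of_ne (hHL : IsHL Hgr N₁ N₂) (hψ : IsPolarization Hgr N₁ N₂ ψ)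
    (hw : IsW Hgr N₁ N₂ w) (i j : (ℕ × ℕ) × (ℕ × ℕ)) (hij : i ≠ j) :
    ∀ x ∈ lefschetzPiece Hgr N₁ N₂ i, ∀ y ∈ lefschetzPiece Hgr N₁ N₂ j,
      hodgeForm ψ w x y = 0 := by
  obtain ⟨⟨a, b⟩, ⟨r, s⟩⟩ := i
  obtain ⟨⟨a', b'⟩, ⟨r', s'⟩⟩ := j
  rintro _ ⟨p, hp, rfl⟩ _ ⟨q, hq, rfl⟩
  by_cases hrs : r' ≤ a' ∧ s' ≤ b'
  · rw [hodgeForm_monomial hHL hψ hw hrs p hq]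
    by_contra hne
    have := eq_of_psi_prim_ne_zero hHL hψ hp hq (right_ne_zero_of_mul hne)
    apply hij
    simp only [Prod.mk.injEq]
    omega
  · rw [hHL.monomial_apply_prim_eq_zero hq hrs, map_zero]

theorem hodgeForm_comm_of_mem_lefschetzPiece (hHL : IsHL Hgr N₁ N₂)
    (hψ : IsPolarization Hgr N₁ N₂ ψ) (hw : IsW Hgr N₁ N₂ w) (i : (ℕ × ℕ) × (ℕ × ℕ)) :
    ∀ x ∈ lefschetzPiece Hgr N₁ N₂ i, ∀ y ∈ lefschetzPiece Hgr N₁ N₂ i,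
      hodgeForm ψ w x y = hodgeForm ψ w y x := by
  obtain ⟨⟨a, b⟩, ⟨r, s⟩⟩ := i
  rintro _ ⟨p, hp, rfl⟩ _ ⟨q, hq, rfl⟩
  by_cases hrs : r ≤ a ∧ s ≤ b
  · rw [hodgeForm_monomial_self hHL hψ hw hrs p hq, hodgeForm_monomial_self hHL hψ hw hrs q hp]
    exact congrArg _ (hψ.primSymm a b p hp q hq)
  · simp only [hHL.monomial_apply_prim_eq_zero hp hrs, hHL.monomial_apply_prim_eq_zero hq hrs]

theorem hodgeForm_self_pos_of_mem_lefschetzPiece (hHL : IsHL Hgr N₁ N₂)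
    (hψ : IsPolarization Hgr N₁ N₂ ψ) (hw : IsW Hgr N₁ N₂ w) (i : (ℕ × ℕ) × (ℕ × ℕ)) :
    ∀ x ∈ lefschetzPiece Hgr N₁ N₂ i, x ≠ 0 → 0 < hodgeForm ψ w x x := by
  obtain ⟨⟨a, b⟩, ⟨r, s⟩⟩ := i
  rintro _ ⟨p, hp, rfl⟩ hne
  have hrs : r ≤ a ∧ s ≤ b := by
    by_contra h
    exact hne (hHL.monomial_apply_prim_eq_zero hp h)
  have hp₀ : p ≠ 0 := by
    rintro rfl
    exact hne (map_zero _)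
  rw [hodgeForm_monomial_self hHL hψ hw hrs p hp]
  exact mul_pos (weylCoeff_pos a b r s) (hψ.primPosDef a b p hp hp₀)

theorem isSymm_hodgeForm (hHL : IsHL Hgr N₁ N₂) (hψ : IsPolarization Hgr N₁ N₂ ψ)
    (hw : IsW Hgr N₁ N₂ w) : (hodgeForm ψ w).IsSymm :=
  isSymm_of_iSup_eq_top hHL.iSup_lefschetzPiece_eq_top (hodgeForm_eq_zero_of_ne hHL hψ hw)
    (hodgeForm_comm_of_mem_lefschetzPiece hHL hψ hw)

theorem hodgeForm_self_pos (hHL : IsHL Hgr N₁ N₂) (hψ : IsPolarization Hgr N₁ N₂ ψ)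
    (hw : IsW Hgr N₁ N₂ w) (x : H) (hx : x ≠ 0) : 0 < hodgeForm ψ w x x :=
  apply_self_pos_of_iSup_eq_top hHL.iSup_lefschetzPiece_eq_top
    (hodgeForm_eq_zero_of_ne hHL hψ hw) (hodgeForm_self_pos_of_mem_lefschetzPiece hHL hψ hw) hx

theorem IsW.apply_mem (hw : IsW Hgr N₁ N₂ w) (hHL : IsHL Hgr N₁ N₂) {k l : ℤ} {x : H}
    (hx : x ∈ Hgr k l) : w x ∈ Hgr (-k) (-l) := by
  suffices h : Hgr k l ≤ (Hgr (-k) (-l)).comap w from h hx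
  refine (hHL.le_iSup_lefschetzPiece k l).trans ?_
  refine iSup_le fun a => iSup₂_le fun r hr => iSup_le fun b => iSup₂_le fun s hs => ?_
  rintro _ ⟨p, hp, rfl⟩
  rw [Submodule.mem_comap]
  by_cases hrs : r ≤ a ∧ s ≤ b
  · rw [hw.apply_monomial hrs hp]
    refine Submodule.smul_mem _ _ ?_
    convert hHL.monomial_apply_mem hp.1.1 (a - r) (b - s) using 2 <;> omega
  · rw [hHL.monomial_apply_prim_eq_zero hp hrs, map_zero]
    exact Submodule.zero_mem _

theorem IsW.map_eq (hw : IsW Hgr N₁ N₂ w) (hHL : IsHL Hgr N₁ N₂)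
    (hinj : Function.Injective w) (k l : ℤ) : (Hgr k l).map w = Hgr (-k) (-l) := by
  have := hHL.findim
  have hle (k l : ℤ) : (Hgr k l).map w ≤ Hgr (-k) (-l) :=
    Submodule.map_le_iff_le_comap.2 fun _ => hw.apply_mem hHL
  have hfinrank (S : Submodule ℝ H) : Module.finrank ℝ (S.map w) = Module.finrank ℝ S :=
    (Submodule.equivMapOfInjective w hinj S).finrank_eq.symm
  refine Submodule.eq_of_le_of_finrank_le (hle k l) ?_
  have hback := Submodule.finrank_mono (hle (-k) (-l))
  rwa [hfinrank, neg_neg, neg_neg, ← hfinrank (Hgr k l)] at hback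

theorem IsW.inv_apply_mem (hw : IsW Hgr N₁ N₂ w) (hHL : IsHL Hgr N₁ N₂)
    (hinv : winv ∘ₗ w = LinearMap.id) {k l : ℤ} {x : H} (hx : x ∈ Hgr k l) :
    winv x ∈ Hgr (-k) (-l) := by
  have hleft : Function.LeftInverse winv w := LinearMap.congr_fun hinv
  have hmap := hw.map_eq hHL hleft.injective (-k) (-l)
  rw [neg_neg, neg_neg] at hmap
  obtain ⟨y, hy, rfl⟩ := hmap.ge hx
  rwa [hleft]

theorem IsW.dstar_apply_mem (hw : IsW Hgr N₁ N₂ w) (hHL : IsHL Hgr N₁ N₂)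
    (hinv : winv ∘ₗ w = LinearMap.id) {dd : H →ₗ[ℝ] H} {m n : ℤ}
    (hdeg : ∀ a b : ℤ, ∀ x ∈ Hgr a b, dd x ∈ Hgr (a - m) (b - n)) {k l : ℤ} {x : H}
    (hx : x ∈ Hgr k l) : dstar w winv dd x ∈ Hgr (k + m) (l + n) := by
  have hmem := hw.inv_apply_mem hHL hinv (hdeg _ _ _ (hw.apply_mem hHL hx))
  rw [show k + m = -(-k - m) by ring, show l + n = -(-l - n) by ring]
  exact Submodule.neg_mem _ hmem

theorem isAdjointPair_dstar (hinv : w ∘ₗ winv = LinearMap.id) {dd : H →ₗ[ℝ] H}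
    (hskew : ∀ x y : H, ψ (dd x) y + ψ x (dd y) = 0) :
    LinearMap.IsAdjointPair (hodgeForm ψ w) (hodgeForm ψ w) dd (dstar w winv dd) := fun x y => by
  have hright : w (winv (dd (w y))) = dd (w y) := LinearMap.congr_fun hinv _
  simp only [hodgeForm, LinearMap.compl₂_apply, dstar, LinearMap.neg_apply,
    LinearMap.comp_apply, map_neg, hright]
  exact eq_neg_of_add_eq_zero_left (hskew x (w y))

end Bigraded

end HLS

open HLS in
theorem statement14_general
    {H : Type} [AddCommGroup H] [Module ℝ H]
    (Hgr : ℤ → ℤ → Submodule ℝ H) (N₁ N₂ : H →ₗ[ℝ] H)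
    (hHL : IsHL Hgr N₁ N₂)
    (ψ : H →ₗ[ℝ] H →ₗ[ℝ] ℝ) (hψ : IsPolarization Hgr N₁ N₂ ψ)
    (w : H →ₗ[ℝ] H) (hw : IsW Hgr N₁ N₂ w)
    (winv : H →ₗ[ℝ] H) (hwinv : winv ∘ₗ w = LinearMap.id ∧ w ∘ₗ winv = LinearMap.id)
    (dd : H →ₗ[ℝ] H) (m n : ℤ)
    (hdeg : ∀ a b : ℤ, ∀ x ∈ Hgr a b, dd x ∈ Hgr (a - m) (b - n))
    (hsq : ∀ x, dd (dd x) = 0) (hskew : ∀ x y : H, ψ (dd x) y + ψ x (dd y) = 0) :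
    (∀ x y : H, ψ x (w (dstar w winv dd y)) = ψ (dd x) (w y)) ∧
    (∀ x y : H, ψ (lap w winv dd x) (w y) = ψ x (w (lap w winv dd y))) ∧
    (∀ a b : ℤ,
      (LinearMap.ker dd ⊓ Hgr a b =
        (LinearMap.ker (lap w winv dd) ⊓ Hgr a b) ⊔ (LinearMap.range dd ⊓ Hgr a b)) ∧
      Disjoint (LinearMap.ker (lap w winv dd) ⊓ Hgr a b)
        (LinearMap.range dd ⊓ Hgr a b) ∧
      (∀ x ∈ LinearMap.ker (lap w winv dd) ⊓ Hgr a b,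
        ∀ y ∈ LinearMap.range dd ⊓ Hgr a b, ψ x (w y) = 0)) := by
  have := hHL.findim
  have hsymm := isSymm_hodgeForm hHL hψ hw
  have hpos := hodgeForm_self_pos hHL hψ hw
  have hadj := isAdjointPair_dstar hwinv.2 hskew
  refine ⟨fun x y => (hadj x y).symm, isSelfAdjoint_laplacian hsymm hadj, fun a b => ⟨?_, ?_, ?_⟩⟩
  · refine ker_inf_eq_ker_laplacian_inf_sup_range_inf hsymm hpos hadj hsq fun x hx => ?_
    have hmem := hdeg _ _ _ (hw.dstar_apply_mem hHL hwinv.1 hdeg hx)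
    rwa [add_sub_cancel_right, add_sub_cancel_right] at hmem
  · exact (disjoint_ker_laplacian_range hsymm hpos hadj).mono inf_le_left inf_le_left
  · exact fun x hx y hy =>
      apply_eq_zero_of_mem_ker_laplacian_of_mem_range hsymm hpos hadj hx.1 hy.1

open HLS in
/-- let `d` be a differential on a polarized bigraded Hodge–Lefschetz
structure `(H, N₁, N₂, ψ)`. Then, with `φ(x,y) = ψ(x, w y)`, `d* = -w⁻¹ d w` and
`Δ = d d* + d* d`: (i) `d*` is the `φ`-adjoint of `d`; (ii) `Δ` is `φ`-symmetric; and
(iii) for every `(a,b)`, `ker(d) ∩ H_{a,b} = (ker(Δ) ∩ H_{a,b}) ⊕ (im(d) ∩ H_{a,b})`,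
orthogonally for `φ`. -/
theorem statement14
    {H : Type} [AddCommGroup H] [Module ℝ H]
    (Hgr : ℤ → ℤ → Submodule ℝ H) (N₁ N₂ : H →ₗ[ℝ] H)
    (hHL : IsHL Hgr N₁ N₂)
    (ψ : H →ₗ[ℝ] H →ₗ[ℝ] ℝ) (hψ : IsPolarization Hgr N₁ N₂ ψ)
    (w : H →ₗ[ℝ] H) (hw : IsW Hgr N₁ N₂ w)
    (winv : H →ₗ[ℝ] H) (hwinv : winv ∘ₗ w = LinearMap.id ∧ w ∘ₗ winv = LinearMap.id)
    (dd : H →ₗ[ℝ] H) (hd : IsDifferential Hgr N₁ N₂ ψ dd) :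
    -- (i) `d*` is adjoint to `d` with respect to `φ`
    (∀ x y : H, ψ x (w (dstar w winv dd y)) = ψ (dd x) (w y)) ∧
    -- (ii) `Δ` is symmetric for `φ`
    (∀ x y : H, ψ (lap w winv dd x) (w y) = ψ x (w (lap w winv dd y))) ∧
    -- (iii) the `φ`-orthogonal decomposition `ker d ∩ H_{a,b} = (ker Δ ∩ H_{a,b}) ⊕ (im d ∩ H_{a,b})`
    (∀ a b : ℤ,
      (LinearMap.ker dd ⊓ Hgr a b =
        (LinearMap.ker (lap w winv dd) ⊓ Hgr a b) ⊔ (LinearMap.range dd ⊓ Hgr a b)) ∧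
      Disjoint (LinearMap.ker (lap w winv dd) ⊓ Hgr a b)
        (LinearMap.range dd ⊓ Hgr a b) ∧
      (∀ x ∈ LinearMap.ker (lap w winv dd) ⊓ Hgr a b,
        ∀ y ∈ LinearMap.range dd ⊓ Hgr a b, ψ x (w y) = 0)) := by
  exact statement14_general Hgr N₁ N₂ hHL ψ hψ w hw winv hwinv dd 1 1 hd.mem hd.sq hd.skew
end

section
/- Let d be a differential on a polarized bigraded Hodge–Lefschetz structure (H, N₁, N₂, ψ), with Laplacian Δ = d d* + d* d. Then the Laplacian commutes with both monodromy operators: ΔN₁ = N₁Δ and ΔN₂ = N₂Δ. -/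
/-!
Each `Nᵢ` is the lowering operator of an `sl₂`-triple `(hᵢ, Xᵢ, Nᵢ)`, with `hᵢ` the `i`-th degree
and `Xᵢ = -w⁻¹ Nᵢ w`, and `w = θ₂ θ₁` where `θᵢ = exp (-Xᵢ) exp Nᵢ exp (-Xᵢ)` is the Weyl element
of the `i`-th `SL₂`. Under the adjoint actions `d` is a lowest weight vector of weight `-1` for
both triples, whence `d θᵢ = θᵢ [Xᵢ, d]` and `E := w⁻¹ d w = [X₁, [X₂, d]]`. Therefore
`[N₁, E] = -[h₁, [X₂, d]] = [X₂, d]`, and since `Δ = -(d E + E d)`, the commutator of `N₁` with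
`-Δ` is `d [X₂, d] + [X₂, d] d = [X₂, d²] = 0`. Exchanging the two gradings gives the statement
for `N₂`.
-/

namespace HLS

open Module
open IsNilpotent (exp)

attribute [local instance] LieRing.ofAssociativeRing

section Exponential

variable {A : Type*} [Ring A] [Algebra ℚ A] {a b : A}

theorem exp_mulLeft (ha : IsNilpotent a) :
    exp (LinearMap.mulLeft ℚ a) = LinearMap.mulLeft ℚ (exp a) := by
  obtain ⟨k, hk⟩ := ha
  have hk' : LinearMap.mulLeft ℚ a ^ k = 0 := by simp [LinearMap.pow_mulLeft, hk]
  ext b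
  simp [IsNilpotent.exp_eq_sum hk, IsNilpotent.exp_eq_sum hk', LinearMap.pow_mulLeft,
    Finset.sum_mul]

theorem exp_mulRight (ha : IsNilpotent a) :
    exp (LinearMap.mulRight ℚ a) = LinearMap.mulRight ℚ (exp a) := by
  obtain ⟨k, hk⟩ := ha
  have hk' : LinearMap.mulRight ℚ a ^ k = 0 := by simp [LinearMap.pow_mulRight, hk]
  ext b
  simp [IsNilpotent.exp_eq_sum hk, IsNilpotent.exp_eq_sum hk', LinearMap.pow_mulRight,
    Finset.mul_sum]

theorem exp_mul_eq_exp_ad_mul_exp (ha : IsNilpotent a) (b : A) :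
    exp a * b = exp (LieAlgebra.ad ℚ A a) b * exp a := by
  have hl : IsNilpotent (LinearMap.mulLeft ℚ a) := by rwa [LinearMap.isNilpotent_mulLeft_iff]
  have hr : IsNilpotent (LinearMap.mulRight ℚ (-a)) := by
    rw [LinearMap.isNilpotent_mulRight_iff]; exact ha.neg
  have had : LieAlgebra.ad ℚ A a = LinearMap.mulLeft ℚ a + LinearMap.mulRight ℚ (-a) := by
    ext; simp [Ring.lie_def, sub_eq_add_neg]
  rw [had, IsNilpotent.exp_add_of_commute (LinearMap.commute_mulLeft_right a (-a)) hl hr,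
    exp_mulLeft ha, exp_mulRight ha.neg]
  simp [mul_assoc, IsNilpotent.exp_neg_mul_exp_self ha]

theorem exp_mul_of_lie_lie_eq_zero (ha : IsNilpotent a) (h : ⁅a, ⁅a, b⁆⁆ = 0) :
    exp a * b = (b + ⁅a, b⁆) * exp a := by
  have hk : (LieAlgebra.ad ℚ A a ^ 2) • b = 0 := by simpa [pow_two] using h
  rw [exp_mul_eq_exp_ad_mul_exp ha, ← Module.End.smul_def,
    IsNilpotent.exp_smul_eq_sum hk (LieAlgebra.ad_nilpotent_of_nilpotent ha)]
  simp [Finset.sum_range_succ]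

theorem exp_mul_of_lie_lie_lie_eq_zero (ha : IsNilpotent a) (h : ⁅a, ⁅a, ⁅a, b⁆⁆⁆ = 0) :
    exp a * b = (b + ⁅a, b⁆ + (2⁻¹ : ℚ) • ⁅a, ⁅a, b⁆⁆) * exp a := by
  have hk : (LieAlgebra.ad ℚ A a ^ 3) • b = 0 := by simpa [pow_succ] using h
  rw [exp_mul_eq_exp_ad_mul_exp ha, ← Module.End.smul_def,
    IsNilpotent.exp_smul_eq_sum hk (LieAlgebra.ad_nilpotent_of_nilpotent ha)]
  simp [Finset.sum_range_succ, pow_two]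

end Exponential

section Nilpotent

variable {K V : Type*} [Field K] [CharZero K] [AddCommGroup V] [Module K V]
  [FiniteDimensional K V]

theorem isNilpotent_of_lie_eq_smul {h e : End K V} {c : K} (hc : c ≠ 0) (he : ⁅h, e⁆ = c • e) :
    IsNilpotent e := by
  -- A nonzero `e ^ n` is an eigenvector of `ad h` with eigenvalue `n * c`.
  by_contra hnil
  have lie_pow (n : ℕ) : ⁅h, e ^ n⁆ = ((n : K) * c) • e ^ n := by
    induction n with
    | zero => simp [Ring.lie_def]
    | succ n ih =>
      have leibniz : ⁅h, e ^ n * e⁆ = ⁅h, e ^ n⁆ * e + e ^ n * ⁅h, e⁆ := by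
        simp only [Ring.lie_def]; noncomm_ring
      rw [pow_succ, leibniz, ih, he, smul_mul_assoc, mul_smul_comm, ← add_smul]
      push_cast
      ring_nf
  have eigenvalue (n : ℕ) : (LieAlgebra.ad K (End K V) h).HasEigenvalue ((n : K) * c) :=
    Module.End.hasEigenvalue_of_hasEigenvector (x := e ^ n)
      (Module.End.hasEigenvector_iff.2
        ⟨Module.End.mem_eigenspace_iff.2 (lie_pow n), fun h0 => hnil ⟨n, h0⟩⟩)
  have injective : Function.Injective fun n : ℕ => (n : K) * c := fun m n hmn => by
    simpa [hc] using hmn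
  exact Set.infinite_of_injective_forall_mem injective eigenvalue
    (Module.End.finite_hasEigenvalue (LieAlgebra.ad K (End K V) h))

end Nilpotent

section Sl2

variable {K V : Type*} [Field K] [AddCommGroup V] [Module K V] {h e f : End K V}

theorem e_apply_pow_f_apply {t : IsSl2Triple h e f} {a : ℕ} {x : V}
    (P : t.HasPrimitiveVectorWith x (a : K)) (n : ℕ) :
    e ((f ^ (n + 1)) x) = ((n + 1) * (a - n) : K) • (f ^ n) x := by
  simpa [LieModule.toEnd_module_end] using P.lie_e_pow_succ_toEnd_f n

variable [CharZero K]

theorem pow_e_apply_pow_f_apply {t : IsSl2Triple h e f} {a : ℕ} {x : V}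
    (P : t.HasPrimitiveVectorWith x (a : K)) {i j : ℕ} (hij : i + j = a) :
    (e ^ i) ((f ^ a) x) = (a.factorial * i.factorial / j.factorial : K) • (f ^ j) x := by
  induction i generalizing j with
  | zero =>
    obtain rfl : j = a := by omega
    simp [Nat.factorial_ne_zero]
  | succ i ih =>
    have coeff : (a.factorial * i.factorial / (j + 1).factorial : K) * ((j + 1) * (a - j)) =
        a.factorial * (i + 1).factorial / j.factorial := by
      have hj : (j.factorial : K) ≠ 0 := Nat.cast_ne_zero.2 j.factorial_ne_zero
      have hj' : (j + 1 : K) ≠ 0 := j.cast_add_one_ne_zero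
      rw [Nat.factorial_succ, Nat.factorial_succ, ← hij]
      push_cast
      field_simp
      ring
    rw [pow_succ', Module.End.mul_apply, ih (j := j + 1) (by omega), map_smul,
      e_apply_pow_f_apply P, smul_smul, coeff]

variable [FiniteDimensional K V]

theorem isNilpotent_e (t : IsSl2Triple h e f) : IsNilpotent e :=
  isNilpotent_of_lie_eq_smul (K := K) two_ne_zero (t.lie_h_e_smul K)

theorem isNilpotent_f (t : IsSl2Triple h e f) : IsNilpotent f :=
  isNilpotent_e t.symm

theorem lie_e_lie_e_eq_zero (t : IsSl2Triple h e f) {T : End K V} (hf : ⁅f, T⁆ = 0)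
    (hh : ⁅h, T⁆ = -T) : ⁅e, ⁅e, T⁆⁆ = 0 := by
  rcases eq_or_ne T 0 with rfl | hT
  · simp
  have P : t.symm.HasPrimitiveVectorWith T (1 : K) := ⟨hT, by simp [hh], hf⟩
  simpa [pow_two] using P.pow_toEnd_f_eq_zero_of_eq_nat (n := 1) (by simp)

variable [Module ℚ V]

/-- The element `[[0, -1], [1, 0]]` of `SL₂`, which exchanges the weight spaces of opposite weight,
acting through the representation in which `e` and `f` are the images of `[[0, 1], [0, 0]]` and
`[[0, 0], [1, 0]]`. -/
noncomputable def weylElement (e f : End K V) : End K V :=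
  exp (-e) * exp f * exp (-e)

theorem mul_weylElement (t : IsSl2Triple h e f) {T : End K V} (hf : ⁅f, T⁆ = 0)
    (hh : ⁅h, T⁆ = -T) : T * weylElement e f = weylElement e f * ⁅e, T⁆ := by
  have heeT : ⁅e, ⁅e, T⁆⁆ = 0 := lie_e_lie_e_eq_zero t hf hh
  have hfeT : ⁅f, ⁅e, T⁆⁆ = T := by
    rw [leibniz_lie, ← lie_skew f e, t.lie_e_f, hf, lie_zero, add_zero, neg_lie, hh, neg_neg]
  have conj_left : exp (-e) * (⁅e, T⁆ + T) = T * exp (-e) := by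
    rw [exp_mul_of_lie_lie_eq_zero (isNilpotent_e t).neg
      (by simp only [neg_lie, lie_neg, lie_add, heeT, neg_zero, zero_add])]
    simp only [neg_lie, lie_add, heeT]
    congr 1
    abel
  have conj_mid : exp f * ⁅e, T⁆ = (⁅e, T⁆ + T) * exp f := by
    rw [exp_mul_of_lie_lie_eq_zero (isNilpotent_f t) (by simp [hfeT, hf]), hfeT]
  have conj_right : exp (-e) * ⁅e, T⁆ = ⁅e, T⁆ * exp (-e) := by
    rw [exp_mul_of_lie_lie_eq_zero (isNilpotent_e t).neg (by simp [heeT])]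
    simp [heeT]
  calc T * weylElement e f
      = T * exp (-e) * exp f * exp (-e) := by
        simp only [weylElement, mul_assoc]
    _ = exp (-e) * (exp f * ⁅e, T⁆) * exp (-e) := by
        rw [← conj_left, conj_mid]; simp only [mul_assoc]
    _ = weylElement e f * ⁅e, T⁆ := by
        simp only [weylElement, mul_assoc, conj_right]

theorem weylElement_mul_f (t : IsSl2Triple h e f) :
    weylElement e f * f = -(e * weylElement e f) := by
  have hef : ⁅f, e⁆ = -h := by rw [← lie_skew, t.lie_e_f]
  have hfh : ⁅f, h⁆ = 2 • f := by rw [← lie_skew, t.lie_h_f_nsmul, neg_neg]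
  have heh : ⁅e, h⁆ = -(2 • e) := by rw [← lie_skew, t.lie_h_e_nsmul]
  have conj_right : exp (-e) * f = (f - h - e) * exp (-e) := by
    rw [exp_mul_of_lie_lie_lie_eq_zero (isNilpotent_e t).neg
      (by simp only [neg_lie, lie_neg, lie_nsmul, t.lie_e_f, heh, lie_self, neg_zero, smul_zero])]
    simp only [neg_lie, lie_neg, t.lie_e_f, heh]
    congr 1
    module
  have conj_mid : exp f * (f - h - e) = -e * exp f := by
    rw [exp_mul_of_lie_lie_lie_eq_zero (isNilpotent_f t)
      (by simp only [lie_sub, lie_neg, lie_nsmul, hef, hfh, lie_self, neg_zero, smul_zero,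
        sub_zero, lie_zero])]
    simp only [lie_sub, lie_neg, lie_nsmul, hef, hfh, lie_self, smul_zero, lie_zero]
    congr 1
    module
  have conj_left : exp (-e) * e = e * exp (-e) := by
    rw [exp_mul_of_lie_lie_eq_zero (isNilpotent_e t).neg (by simp)]
    simp
  calc weylElement e f * f
      = exp (-e) * (exp f * (f - h - e)) * exp (-e) := by
        simp only [weylElement, mul_assoc, conj_right]
    _ = -(exp (-e) * e * exp f * exp (-e)) := by
        rw [conj_mid]; simp only [mul_assoc, neg_mul, mul_neg]
    _ = -(e * weylElement e f) := by
        rw [conj_left]; simp only [weylElement, mul_assoc]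

theorem exp_f_apply {t : IsSl2Triple h e f} {a : ℕ} {x : V}
    (P : t.HasPrimitiveVectorWith x (a : K)) :
    exp f x = exp e ((a.factorial : K)⁻¹ • (f ^ a) x) := by
  have hf : (f ^ (a + 1)) x = 0 := by
    simpa [LieModule.toEnd_module_end] using P.pow_toEnd_f_eq_zero_of_eq_nat rfl
  have he : (e ^ (a + 1)) ((a.factorial : K)⁻¹ • (f ^ a) x) = 0 := by
    rw [map_smul, pow_succ', Module.End.mul_apply, pow_e_apply_pow_f_apply P (add_zero a), map_smul]
    simpa using Or.inr P.lie_e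
  have exp_f := IsNilpotent.exp_smul_eq_sum (k := a + 1) (m := x) hf (isNilpotent_f t)
  have exp_e := IsNilpotent.exp_smul_eq_sum (k := a + 1)
    (m := (a.factorial : K)⁻¹ • (f ^ a) x) he (isNilpotent_e t)
  simp only [Module.End.smul_def] at exp_f exp_e
  rw [exp_f, exp_e, ← Finset.sum_range_reflect]
  refine Finset.sum_congr rfl fun i hi => ?_
  have hi : i + (a - i) = a := by have := Finset.mem_range.1 hi; omega
  rw [map_smul, pow_e_apply_pow_f_apply P hi]
  have ha : (a.factorial : K) ≠ 0 := Nat.cast_ne_zero.2 a.factorial_ne_zero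
  have hi' : (i.factorial : K) ≠ 0 := Nat.cast_ne_zero.2 i.factorial_ne_zero
  rw [← Rat.cast_smul_eq_qsmul K, ← Rat.cast_smul_eq_qsmul K, smul_smul, smul_smul,
    show a + 1 - 1 - i = a - i by omega]
  congr 1
  push_cast
  field_simp

theorem weylElement_apply {t : IsSl2Triple h e f} {a : ℕ} {x : V}
    (P : t.HasPrimitiveVectorWith x (a : K)) :
    weylElement e f x = (a.factorial : K)⁻¹ • (f ^ a) x := by
  have hx : exp (-e) x = x := by
    have := IsNilpotent.exp_smul_eq_sum (a := -e) (m := x) (k := 1) (by simpa using P.lie_e)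
      (isNilpotent_e t).neg
    simpa using this
  rw [weylElement, Module.End.mul_apply, Module.End.mul_apply, hx, exp_f_apply P,
    ← Module.End.mul_apply, IsNilpotent.exp_neg_mul_exp_self (isNilpotent_e t),
    Module.End.one_apply]

theorem weylElement_pow_f_apply {t : IsSl2Triple h e f} {a : ℕ} {x : V}
    (P : t.HasPrimitiveVectorWith x (a : K)) {r k : ℕ} (hrk : r + k = a) :
    weylElement e f ((f ^ r) x) =
      ((-1) ^ r * (r.factorial / k.factorial) : K) • (f ^ k) x := by
  induction r generalizing k with
  | zero =>
    obtain rfl : k = a := by omega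
    simp [weylElement_apply P]
  | succ r ih =>
    have coeff : -((-1) ^ r * (r.factorial / (k + 1).factorial) * ((k + 1) * (a - k)) : K) =
        (-1) ^ (r + 1) * ((r + 1).factorial / k.factorial) := by
      have hk : (k.factorial : K) ≠ 0 := Nat.cast_ne_zero.2 k.factorial_ne_zero
      have hk' : (k + 1 : K) ≠ 0 := k.cast_add_one_ne_zero
      rw [Nat.factorial_succ, Nat.factorial_succ, ← hrk]
      push_cast
      field_simp
      ring
    rw [pow_succ', Module.End.mul_apply, ← Module.End.mul_apply (weylElement e f),
      weylElement_mul_f t, LinearMap.neg_apply, Module.End.mul_apply,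
      ih (k := k + 1) (by omega), map_smul, e_apply_pow_f_apply P, smul_smul, ← neg_smul, coeff]

end Sl2

section Lefschetz

variable {R V : Type*} [Ring R] [AddCommGroup V] [Module R V]

theorem pow_apply_mem_sub {G : ℤ → Submodule R V} {N : End R V}
    (hN : ∀ m, ∀ x ∈ G m, N x ∈ G (m - 2)) (k : ℕ) {m : ℤ} {x : V}
    (hx : x ∈ G m) : (N ^ k) x ∈ G (m - 2 * k) := by
  induction k with
  | zero => simpa using hx
  | succ k ih =>
    rw [pow_succ', Module.End.mul_apply]
    convert hN _ _ ih using 2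
    push_cast
    ring

/-- A `ℤ`-grading with an operator `N` of degree `-2` such that `N ^ m : G m → G (-m)` is
surjective: the part of the hard Lefschetz property that forces `G` to be generated by primitive
vectors. -/
structure IsLefschetz (G : ℤ → Submodule R V) (N : End R V) : Prop where
  map_mem : ∀ m, ∀ x ∈ G m, N x ∈ G (m - 2)
  surjOn : ∀ m : ℕ, Set.SurjOn (N ^ m) (G m) (G (-m))

namespace IsLefschetz

variable {G G' : ℤ → Submodule R V} {N T : End R V}

theorem exists_primitive_add (h : IsLefschetz G N) {a : ℕ} {v : V} (hv : v ∈ G a) :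
    ∃ x ∈ G a, (N ^ (a + 1)) x = 0 ∧ ∃ u ∈ G ↑(a + 2), v = x + N u := by
  obtain ⟨u, hu, hNu⟩ := h.surjOn (a + 2) (a := (N ^ (a + 1)) v) <| by
    rw [SetLike.mem_coe]
    convert pow_apply_mem_sub h.map_mem (a + 1) hv using 2
    push_cast
    ring
  have hNu_mem : N u ∈ G a := by
    convert h.map_mem _ u hu using 2
    push_cast
    ring
  refine ⟨v - N u, (G a).sub_mem hv hNu_mem, ?_, u, hu, by abel⟩
  rw [map_sub, ← Module.End.mul_apply, ← pow_succ, hNu, sub_self]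

variable {S : ℤ → Submodule R V} {M : ℤ}

theorem pow_apply_mem_of_primitive (h : IsLefschetz G N) (hM : ∀ m, M < m → G m = ⊥)
    (hS : ∀ a r : ℕ, r ≤ a → ∀ x ∈ G a, (N ^ (a + 1)) x = 0 → (N ^ r) x ∈ S (a - 2 * r))
    (k : ℕ) {a : ℕ} (hk : M < a + k) {v : V} (hv : v ∈ G a) (r : ℕ) :
    (N ^ r) v ∈ S (a - 2 * r) := by
  induction k generalizing a v r with
  | zero =>
    rw [hM a (by simpa using hk), Submodule.mem_bot] at hv
    simp [hv]
  | succ k ih =>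
    obtain ⟨x, hx, hNx, u, hu, rfl⟩ := h.exists_primitive_add hv
    have primitive_part : (N ^ r) x ∈ S (a - 2 * r) := by
      rcases le_or_gt r a with hr | hr
      · exact hS a r hr x hx hNx
      · rw [Module.End.pow_map_zero_of_le hr hNx]
        exact zero_mem _
    have image_part : (N ^ (r + 1)) u ∈ S (a - 2 * r) := by
      convert ih (by push_cast at hk ⊢; linarith) hu (r + 1) using 2
      push_cast
      ring
    rw [map_add, ← Module.End.mul_apply, ← pow_succ]
    exact add_mem primitive_part image_part

theorem le_of_primitive (h : IsLefschetz G N) (hM : ∀ m, M < m → G m = ⊥)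
    (hS : ∀ a r : ℕ, r ≤ a → ∀ x ∈ G a, (N ^ (a + 1)) x = 0 → (N ^ r) x ∈ S (a - 2 * r))
    (m : ℤ) : G m ≤ S m := by
  have pow_mem (a : ℕ) {v : V} (hv : v ∈ G a) (r : ℕ) : (N ^ r) v ∈ S (a - 2 * r) :=
    h.pow_apply_mem_of_primitive hM hS (M.toNat + 1) (by omega) hv r
  intro v hv
  rcases Int.eq_nat_or_neg m with ⟨a, rfl | rfl⟩
  · simpa using pow_mem a hv 0
  · obtain ⟨u, hu, rfl⟩ := h.surjOn a hv
    convert pow_mem a hu a using 2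
    ring

theorem inf_ker (h : IsLefschetz G N) (hNT : Commute N T) (hT : ∀ m, ∀ x ∈ G m, T x ∈ G' m)
    (hinj : ∀ m : ℕ, ∀ x ∈ G' m, (N ^ m) x = 0 → x = 0) :
    IsLefschetz (fun m => G m ⊓ LinearMap.ker T) N where
  map_mem := by
    rintro m x ⟨hx, hTx : T x = 0⟩
    refine ⟨h.map_mem m x hx, ?_⟩
    change (T * N) x = 0
    rw [← hNT.eq, Module.End.mul_apply, hTx, map_zero]
  surjOn := by
    rintro m _ ⟨hv, hTv⟩
    obtain ⟨u, hu, rfl⟩ := h.surjOn m hv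
    refine ⟨u, ⟨hu, hinj m _ (hT m u hu) ?_⟩, rfl⟩
    rw [← Module.End.mul_apply, (hNT.pow_left m).eq]
    exact hTv

end IsLefschetz

end Lefschetz

section PrimitiveDecomposition

variable {H : Type} [AddCommGroup H] [Module ℝ H] {Hgr : ℤ → ℤ → Submodule ℝ H}
  {N₁ N₂ : H →ₗ[ℝ] H}

theorem mem_prim_swap {a b : ℕ} {x : H} (hx : x ∈ prim Hgr N₁ N₂ a b) :
    x ∈ prim (fun m n => Hgr n m) N₂ N₁ b a :=
  ⟨⟨hx.1.1, hx.2⟩, hx.1.2⟩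

namespace IsHL

theorem swap (h : IsHL Hgr N₁ N₂) : IsHL (fun m n => Hgr n m) N₂ N₁ where
  findim := h.findim
  internal := by
    have iSup_eq := h.internal.submodule_iSup_eq_top
    rw [← (Equiv.prodComm ℤ ℤ).iSup_comp] at iSup_eq
    exact DirectSum.isInternal_submodule_of_iSupIndep_of_iSup_eq_top
      (h.internal.submodule_iSupIndep.comp (Equiv.prodComm ℤ ℤ).injective) iSup_eq
  mapN₁ m n := h.mapN₂ n m
  mapN₂ m n := h.mapN₁ n m
  comm := h.comm.symm
  bijN₁ a n := h.bijN₂ n a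
  bijN₂ m b := h.bijN₁ b m

theorem commute_s15 (h : IsHL Hgr N₁ N₂) : Commute N₁ N₂ := h.comm

theorem isLefschetz (h : IsHL Hgr N₁ N₂) (n : ℤ) : IsLefschetz (fun m => Hgr m n) N₁ where
  map_mem m := h.mapN₁ m n
  surjOn a v hv := by rwa [SetLike.mem_coe, ← (h.bijN₁ a n).1] at hv

theorem exists_degree_bound (h : IsHL Hgr N₁ N₂) :
    ∃ M : ℤ, ∀ m n, M < m → Hgr m n = ⊥ := by
  have := h.findim
  have finite_support : {p : ℤ × ℤ | Hgr p.1 p.2 ≠ ⊥}.Finite :=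
    WellFoundedGT.finite_ne_bot_of_iSupIndep h.internal.submodule_iSupIndep
  obtain ⟨M, hM⟩ := (finite_support.image Prod.fst).bddAbove
  refine ⟨M, fun m n hm => ?_⟩
  by_contra hne
  exact hm.not_ge (hM ⟨(m, n), hne, rfl⟩)

theorem le_of_prim (h : IsHL Hgr N₁ N₂) {S : ℤ → ℤ → Submodule ℝ H}
    (hS : ∀ a b r s : ℕ, r ≤ a → s ≤ b → ∀ x ∈ prim Hgr N₁ N₂ a b,
      (N₁ ^ r) ((N₂ ^ s) x) ∈ S (a - 2 * r) (b - 2 * s)) (m n : ℤ) : Hgr m n ≤ S m n := by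
  obtain ⟨M₁, hM₁⟩ := h.exists_degree_bound
  obtain ⟨M₂, hM₂⟩ := h.swap.exists_degree_bound
  refine (h.isLefschetz n).le_of_primitive (S := fun m => S m n) (fun m => hM₁ m n) ?_ m
  intro a r hr x hx hNx
  have isLefschetz_ker : IsLefschetz (fun n => Hgr a n ⊓ LinearMap.ker (N₁ ^ (a + 1))) N₂ :=
    (h.swap.isLefschetz a).inf_ker (h.commute_s15.symm.pow_right (a + 1))
      (fun n y hy => pow_apply_mem_sub (G := fun m => Hgr m n)
        (fun m => h.mapN₁ m n) (a + 1) hy)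
      fun b => (h.bijN₂ _ b).2
  refine isLefschetz_ker.le_of_primitive (S := fun n => (S (a - 2 * r) n).comap (N₁ ^ r))
    (fun n hn => by rw [hM₂ n a hn, bot_inf_eq]) ?_ n ⟨hx, hNx⟩
  exact fun b s hs y hy hNy => hS a b r s hr hs y ⟨hy, hNy⟩

theorem hom_ext_graded (h : IsHL Hgr N₁ N₂) {A B : End ℝ H}
    (hAB : ∀ m n, ∀ x ∈ Hgr m n, A x = B x) : A = B := by
  refine LinearMap.eqLocus_eq_top.1 (top_le_iff.1 ?_)
  rw [← h.internal.submodule_iSup_eq_top]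
  exact iSup_le fun p => hAB p.1 p.2

theorem hom_ext (h : IsHL Hgr N₁ N₂) {A B : End ℝ H}
    (hAB : ∀ a b r s : ℕ, r ≤ a → s ≤ b → ∀ x ∈ prim Hgr N₁ N₂ a b,
      A ((N₁ ^ r) ((N₂ ^ s) x)) = B ((N₁ ^ r) ((N₂ ^ s) x))) : A = B :=
  h.hom_ext_graded fun m n => h.le_of_prim (S := fun _ _ => LinearMap.eqLocus A B) hAB m n

end IsHL

end PrimitiveDecomposition

section Raising

variable {H : Type} [AddCommGroup H] [Module ℝ H] {Hgr : ℤ → ℤ → Submodule ℝ H}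
  {N₁ N₂ w winv dd : H →ₗ[ℝ] H} {a b r s : ℕ} {x : H}

theorem pow_apply_eq_zero_of_mem_prim (h : IsHL Hgr N₁ N₂) (hx : x ∈ prim Hgr N₁ N₂ a b)
    (hr : a < r) : (N₁ ^ r) ((N₂ ^ s) x) = 0 := by
  have hNx : (N₁ ^ r) x = 0 := Module.End.pow_map_zero_of_le hr hx.1.2
  rw [← Module.End.mul_apply, (h.commute_s15.pow_pow r s).eq, Module.End.mul_apply, hNx, map_zero]

namespace IsW

theorem swap (h : IsHL Hgr N₁ N₂) (hw : IsW Hgr N₁ N₂ w) :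
    IsW (fun m n => Hgr n m) N₂ N₁ w := by
  intro b a s r x hx
  have pow_comp (i j : ℕ) : (N₂ ^ j) ∘ₗ (N₁ ^ i) = (N₁ ^ i) ∘ₗ (N₂ ^ j) :=
    (h.commute_s15.pow_pow i j).eq.symm
  rw [pow_comp, pow_comp, hw a b r s x (mem_prim_swap hx), add_comm s r, mul_right_comm]
  simp only [and_comm]

theorem apply_eq_zero (hw : IsW Hgr N₁ N₂ w) (hx : x ∈ prim Hgr N₁ N₂ a b)
    (hrs : a < r ∨ b < s) : w ((N₁ ^ r) ((N₂ ^ s) x)) = 0 := by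
  rw [← LinearMap.comp_apply (N₁ ^ r), hw a b r s x hx, if_neg (by omega)]

theorem apply_pow (hw : IsW Hgr N₁ N₂ w) (hx : x ∈ prim Hgr N₁ N₂ a b) {i j : ℕ}
    (hi : r + i = a) (hj : s + j = b) :
    w ((N₁ ^ r) ((N₂ ^ s) x)) = (((-1) ^ r * (r.factorial / i.factorial)) *
      ((-1) ^ s * (s.factorial / j.factorial)) : ℝ) • (N₁ ^ i) ((N₂ ^ j) x) := by
  obtain rfl : i = a - r := by omega
  obtain rfl : j = b - s := by omega
  rw [← LinearMap.comp_apply (N₁ ^ r), hw a b r s x hx, if_pos (by omega), LinearMap.comp_apply]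
  congr 1
  ring

theorem lower_apply_eq_zero (h : IsHL Hgr N₁ N₂) (hw : IsW Hgr N₁ N₂ w)
    (hx : x ∈ prim Hgr N₁ N₂ a b) : N₁ (w ((N₂ ^ s) x)) = 0 := by
  change N₁ (w ((N₁ ^ 0) ((N₂ ^ s) x))) = 0
  rcases le_or_gt s b with hs | hs
  · obtain ⟨j, rfl⟩ := Nat.exists_eq_add_of_le hs
    rw [hw.apply_pow hx (zero_add a) rfl, map_smul, ← Module.End.mul_apply, ← pow_succ',
      pow_apply_eq_zero_of_mem_prim h hx a.lt_succ_self, smul_zero]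
  · rw [hw.apply_eq_zero hx (Or.inr hs), map_zero]

theorem lower_apply_pow_succ (hw : IsW Hgr N₁ N₂ w) (hx : x ∈ prim Hgr N₁ N₂ a b) (r s : ℕ) :
    N₁ (w ((N₁ ^ (r + 1)) ((N₂ ^ s) x))) =
      -w (((r + 1) * (a - r) : ℝ) • (N₁ ^ r) ((N₂ ^ s) x)) := by
  by_cases hrs : r < a ∧ s ≤ b
  · obtain ⟨i, hi⟩ := Nat.exists_eq_add_of_lt hrs.1
    obtain ⟨j, hj⟩ := Nat.exists_eq_add_of_le hrs.2
    rw [hw.apply_pow hx (i := i) (by omega) hj.symm, map_smul w,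
      hw.apply_pow hx (i := i + 1) (by omega) hj.symm, map_smul, ← Module.End.mul_apply,
      ← pow_succ', smul_smul, ← neg_smul, hi, Nat.factorial_succ, Nat.factorial_succ]
    congr 1
    push_cast
    have hi' : (i + 1 : ℝ) ≠ 0 := i.cast_add_one_ne_zero
    field_simp
    ring
  · rw [hw.apply_eq_zero hx (by omega), map_zero, map_smul]
    rcases eq_or_ne r a with rfl | hra
    · simp
    · rw [hw.apply_eq_zero hx (by omega), smul_zero, neg_zero]

end IsW

/-- The raising operator `-w⁻¹ N w` of the `sl₂`-triple whose lowering operator is `N`. -/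
def raising (w winv N : H →ₗ[ℝ] H) : H →ₗ[ℝ] H := -(winv ∘ₗ N ∘ₗ w)

/-- The Cartan element of the `sl₂`-triple with lowering operator `N`; for `N = Nᵢ` it measures the
`i`-th degree. -/
def weight (w winv N : H →ₗ[ℝ] H) : H →ₗ[ℝ] H := ⁅raising w winv N, N⁆

theorem raising_apply_of_mem_prim (h : IsHL Hgr N₁ N₂) (hw : IsW Hgr N₁ N₂ w)
    (hx : x ∈ prim Hgr N₁ N₂ a b) : raising w winv N₁ ((N₂ ^ s) x) = 0 := by
  simp only [raising, LinearMap.neg_apply, LinearMap.comp_apply, hw.lower_apply_eq_zero h hx,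
    map_zero, neg_zero]

theorem raising_apply_pow_succ (hw : IsW Hgr N₁ N₂ w) (hwinv : winv ∘ₗ w = LinearMap.id)
    (hx : x ∈ prim Hgr N₁ N₂ a b) (r s : ℕ) :
    raising w winv N₁ ((N₁ ^ (r + 1)) ((N₂ ^ s) x)) =
      ((r + 1) * (a - r) : ℝ) • (N₁ ^ r) ((N₂ ^ s) x) := by
  rw [raising, LinearMap.neg_apply, LinearMap.comp_apply, LinearMap.comp_apply,
    hw.lower_apply_pow_succ hx, map_neg, neg_neg, ← LinearMap.comp_apply winv, hwinv,
    LinearMap.id_apply]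

theorem commute_raising_lower (h : IsHL Hgr N₁ N₂) (hw : IsW Hgr N₁ N₂ w)
    (hwinv : winv ∘ₗ w = LinearMap.id) : Commute (raising w winv N₁) N₂ := by
  refine h.hom_ext fun a b r s _ _ x hx => ?_
  have lower_pow (r : ℕ) : N₂ ((N₁ ^ r) ((N₂ ^ s) x)) = (N₁ ^ r) ((N₂ ^ (s + 1)) x) := by
    rw [pow_succ', Module.End.mul_apply, ← Module.End.mul_apply, ← (h.commute_s15.pow_left r).eq,
      Module.End.mul_apply]
  rw [Module.End.mul_apply, Module.End.mul_apply, lower_pow]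
  cases r with
  | zero => simp only [pow_zero, Module.End.one_apply, raising_apply_of_mem_prim h hw hx, map_zero]
  | succ r =>
    rw [raising_apply_pow_succ hw hwinv hx, raising_apply_pow_succ hw hwinv hx, map_smul,
      lower_pow]

theorem raising_mem (h : IsHL Hgr N₁ N₂) (hw : IsW Hgr N₁ N₂ w)
    (hwinv : winv ∘ₗ w = LinearMap.id) (m n : ℤ) (hx : x ∈ Hgr m n) :
    raising w winv N₁ x ∈ Hgr (m + 2) n := by
  have lower_pow_mem {a b r s : ℕ} {y : H} (hy : y ∈ prim Hgr N₁ N₂ a b) :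
      (N₁ ^ r) ((N₂ ^ s) y) ∈ Hgr (a - 2 * r) (b - 2 * s) :=
    pow_apply_mem_sub (G := fun m => Hgr m _) (fun m => h.mapN₁ m _) r
      (pow_apply_mem_sub (h.mapN₂ a) s hy.1.1)
  refine h.le_of_prim (S := fun m n => (Hgr (m + 2) n).comap (raising w winv N₁)) ?_ m n hx
  intro a b r s _ _ y hy
  rw [Submodule.mem_comap]
  cases r with
  | zero =>
    rw [pow_zero, Module.End.one_apply, raising_apply_of_mem_prim h hw hy]
    exact zero_mem _
  | succ r =>
    rw [raising_apply_pow_succ hw hwinv hy]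
    convert Submodule.smul_mem _ _ (lower_pow_mem hy) using 2
    push_cast
    ring

theorem weight_apply (h : IsHL Hgr N₁ N₂) (hw : IsW Hgr N₁ N₂ w)
    (hwinv : winv ∘ₗ w = LinearMap.id) {m n : ℤ} (hx : x ∈ Hgr m n) :
    weight w winv N₁ x = (m : ℝ) • x := by
  refine Module.End.mem_eigenspace_iff.1 (h.le_of_prim
    (S := fun m _ => Module.End.eigenspace (weight w winv N₁) (m : ℝ)) ?_ m n hx)
  intro a b r s _ _ y hy
  rw [Module.End.mem_eigenspace_iff, weight, Ring.lie_def, LinearMap.sub_apply,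
    Module.End.mul_apply, Module.End.mul_apply, ← Module.End.mul_apply N₁, ← pow_succ',
    raising_apply_pow_succ hw hwinv hy]
  cases r with
  | zero =>
    rw [pow_zero, Module.End.one_apply, raising_apply_of_mem_prim h hw hy]
    simp
  | succ r =>
    rw [raising_apply_pow_succ hw hwinv hy, map_smul, ← Module.End.mul_apply N₁, ← pow_succ',
      ← sub_smul]
    congr 1
    push_cast
    ring

theorem lie_weight_eq_smul (h : IsHL Hgr N₁ N₂) (hw : IsW Hgr N₁ N₂ w)
    (hwinv : winv ∘ₗ w = LinearMap.id) {T : End ℝ H} {k l : ℤ}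
    (hT : ∀ m n, ∀ x ∈ Hgr m n, T x ∈ Hgr (m + k) (n + l)) :
    ⁅weight w winv N₁, T⁆ = (k : ℝ) • T := by
  refine h.hom_ext_graded fun m n x hx => ?_
  rw [Ring.lie_def, LinearMap.sub_apply, Module.End.mul_apply, Module.End.mul_apply,
    weight_apply h hw hwinv hx, weight_apply h hw hwinv (hT m n x hx), map_smul,
    ← sub_smul, LinearMap.smul_apply]
  congr 1
  push_cast
  ring

theorem isSl2Triple_raising (h : IsHL Hgr N₁ N₂) (hw : IsW Hgr N₁ N₂ w)
    (hwinv : winv ∘ₗ w = LinearMap.id) (hne : weight w winv N₁ ≠ 0) :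
    IsSl2Triple (weight w winv N₁) (raising w winv N₁) N₁ where
  h_ne_zero := hne
  lie_e_f := rfl
  lie_h_e_nsmul := by
    rw [lie_weight_eq_smul h hw hwinv (k := 2) (l := 0) fun m n x hx => by
      simpa using raising_mem h hw hwinv m n hx]
    module
  lie_h_f_nsmul := by
    rw [lie_weight_eq_smul h hw hwinv (k := -2) (l := 0) fun m n x hx => by
      simpa [sub_eq_add_neg] using h.mapN₁ m n x hx]
    module

variable [Module ℚ H]

theorem weylElement_raising_apply (h : IsHL Hgr N₁ N₂) (hw : IsW Hgr N₁ N₂ w)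
    (hwinv : winv ∘ₗ w = LinearMap.id) (hne : weight w winv N₁ ≠ 0)
    (hx : x ∈ prim Hgr N₁ N₂ a b) {i : ℕ} (hi : r + i = a) (s : ℕ) :
    weylElement (raising w winv N₁) N₁ ((N₁ ^ r) ((N₂ ^ s) x)) =
      ((-1) ^ r * (r.factorial / i.factorial) : ℝ) • (N₁ ^ i) ((N₂ ^ s) x) := by
  have := h.findim
  rcases eq_or_ne ((N₂ ^ s) x) 0 with hzero | hzero
  · simp [hzero]
  have mem_graded : (N₂ ^ s) x ∈ Hgr a (b - 2 * s) := pow_apply_mem_sub (h.mapN₂ a) s hx.1.1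
  have primitive : (isSl2Triple_raising h hw hwinv hne).HasPrimitiveVectorWith
      ((N₂ ^ s) x) (a : ℝ) :=
    ⟨hzero, by simpa using weight_apply h hw hwinv mem_graded, raising_apply_of_mem_prim h hw hx⟩
  exact weylElement_pow_f_apply primitive hi

theorem weylElement_raising_mul_weylElement_raising (h : IsHL Hgr N₁ N₂)
    (hw : IsW Hgr N₁ N₂ w) (hwinv : winv ∘ₗ w = LinearMap.id)
    (hne₁ : weight w winv N₁ ≠ 0) (hne₂ : weight w winv N₂ ≠ 0) :
    weylElement (raising w winv N₂) N₂ * weylElement (raising w winv N₁) N₁ = w := by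
  refine h.hom_ext fun a b r s hr hs x hx => ?_
  obtain ⟨i, hi⟩ := Nat.exists_eq_add_of_le hr
  obtain ⟨j, hj⟩ := Nat.exists_eq_add_of_le hs
  have swap_pow (q : ℕ) : (N₁ ^ i) ((N₂ ^ q) x) = (N₂ ^ q) ((N₁ ^ i) x) :=
    LinearMap.congr_fun (h.commute_s15.pow_pow i q).eq x
  rw [Module.End.mul_apply, weylElement_raising_apply h hw hwinv hne₁ hx hi.symm, map_smul,
    swap_pow, weylElement_raising_apply h.swap (hw.swap h) hwinv hne₂ (mem_prim_swap hx) hj.symm,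
    smul_smul, ← swap_pow, hw.apply_pow hx hi.symm hj.symm]

end Raising

section Laplacian

theorem commute_mul_add_mul_of_lie_eq {A : Type*} [Ring A] {d E N X : A} (hdd : d * d = 0)
    (hdN : Commute d N) (hE : ⁅N, E⁆ = ⁅X, d⁆) : Commute (d * E + E * d) N := by
  have commutator : ⁅N, d * E + E * d⁆ = d * ⁅X, d⁆ + ⁅X, d⁆ * d := by
    rw [← hE]
    simp only [Ring.lie_def]
    linear_combination (norm := noncomm_ring) -hdN.eq * E - E * hdN.eq
  have vanishes : d * ⁅X, d⁆ + ⁅X, d⁆ * d = 0 := by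
    simp only [Ring.lie_def]
    linear_combination (norm := noncomm_ring) X * hdd - hdd * X
  exact (commute_iff_lie_eq.2 (commutator.trans vanishes)).symm

variable {H : Type} [AddCommGroup H] [Module ℝ H] {Hgr : ℤ → ℤ → Submodule ℝ H}
  {N₁ N₂ w winv dd : H →ₗ[ℝ] H}

theorem lie_lower_lie_raising (h : IsHL Hgr N₁ N₂) (hw : IsW Hgr N₁ N₂ w)
    (hwinv : winv ∘ₗ w = LinearMap.id) (hdN₁ : Commute dd N₁) :
    ⁅N₁, ⁅raising w winv N₂, dd⁆⁆ = 0 := by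
  have hXN₁ : Commute (raising w winv N₂) N₁ := commute_raising_lower h.swap (hw.swap h) hwinv
  rw [leibniz_lie, commute_iff_lie_eq.1 hXN₁.symm, commute_iff_lie_eq.1 hdN₁.symm, zero_lie,
    lie_zero, add_zero]

theorem lie_weight_eq_neg (h : IsHL Hgr N₁ N₂) (hw : IsW Hgr N₁ N₂ w)
    (hwinv : winv ∘ₗ w = LinearMap.id)
    (hmem : ∀ m n, ∀ x ∈ Hgr m n, dd x ∈ Hgr (m - 1) (n - 1)) :
    ⁅weight w winv N₁, dd⁆ = -dd := by
  rw [lie_weight_eq_smul h hw hwinv (k := -1) (l := -1) hmem, Int.cast_neg, Int.cast_one,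
    neg_one_smul]

theorem lie_weight_lie_raising (h : IsHL Hgr N₁ N₂) (hw : IsW Hgr N₁ N₂ w)
    (hwinv : winv ∘ₗ w = LinearMap.id)
    (hmem : ∀ m n, ∀ x ∈ Hgr m n, dd x ∈ Hgr (m - 1) (n - 1)) :
    ⁅weight w winv N₁, ⁅raising w winv N₂, dd⁆⁆ = -⁅raising w winv N₂, dd⁆ := by
  have weight_raising : ⁅weight w winv N₁, raising w winv N₂⁆ = 0 := by
    rw [lie_weight_eq_smul h hw hwinv (k := 0) (l := 2) fun m n x hx => by
      simpa using raising_mem h.swap (hw.swap h) hwinv n m hx, Int.cast_zero, zero_smul]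
  rw [leibniz_lie, weight_raising, zero_lie, zero_add, lie_weight_eq_neg h hw hwinv hmem,
    lie_neg]

theorem conj_eq_lie_raising_lie_raising (h : IsHL Hgr N₁ N₂) (hw : IsW Hgr N₁ N₂ w)
    (hwinv : winv ∘ₗ w = LinearMap.id)
    (hmem : ∀ m n, ∀ x ∈ Hgr m n, dd x ∈ Hgr (m - 1) (n - 1))
    (hdN₁ : Commute dd N₁) (hdN₂ : Commute dd N₂) :
    winv ∘ₗ dd ∘ₗ w = ⁅raising w winv N₁, ⁅raising w winv N₂, dd⁆⁆ := by
  rcases eq_or_ne dd 0 with rfl | hdd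
  · simp
  have := h.findim
  let : Module ℚ H := Module.compHom H (algebraMap ℚ ℝ)
  have weight₁ := lie_weight_eq_neg h hw hwinv hmem
  have weight₂ := lie_weight_eq_neg h.swap (hw.swap h) hwinv fun m n => hmem n m
  have hne₁ : weight w winv N₁ ≠ 0 := fun h0 => hdd (by simpa [h0] using weight₁)
  have hne₂ : weight w winv N₂ ≠ 0 := fun h0 => hdd (by simpa [h0] using weight₂)
  have triple₁ := isSl2Triple_raising h hw hwinv hne₁
  have triple₂ := isSl2Triple_raising h.swap (hw.swap h) hwinv hne₂
  have w_eq := weylElement_raising_mul_weylElement_raising h hw hwinv hne₁ hne₂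
  have conj : dd * w = w * ⁅raising w winv N₁, ⁅raising w winv N₂, dd⁆⁆ := by
    nth_rw 1 [← w_eq]
    rw [← mul_assoc, mul_weylElement triple₂ (commute_iff_lie_eq.1 hdN₂.symm) weight₂, mul_assoc,
      mul_weylElement triple₁ (lie_lower_lie_raising h hw hwinv hdN₁)
        (lie_weight_lie_raising h hw hwinv hmem), ← mul_assoc, w_eq]
  calc winv ∘ₗ dd ∘ₗ w = winv ∘ₗ w ∘ₗ ⁅raising w winv N₁, ⁅raising w winv N₂, dd⁆⁆ :=
        congrArg (winv ∘ₗ ·) conj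
    _ = ⁅raising w winv N₁, ⁅raising w winv N₂, dd⁆⁆ := by
        rw [← LinearMap.comp_assoc, hwinv, LinearMap.id_comp]

theorem commute_lap_lower (h : IsHL Hgr N₁ N₂) (hw : IsW Hgr N₁ N₂ w)
    (hwinv : winv ∘ₗ w = LinearMap.id)
    (hmem : ∀ m n, ∀ x ∈ Hgr m n, dd x ∈ Hgr (m - 1) (n - 1)) (hsq : dd ∘ₗ dd = 0)
    (hdN₁ : Commute dd N₁) (hdN₂ : Commute dd N₂) : Commute (lap w winv dd) N₁ := by
  have lie_conj : ⁅N₁, winv ∘ₗ dd ∘ₗ w⁆ = ⁅raising w winv N₂, dd⁆ := by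
    rw [conj_eq_lie_raising_lie_raising h hw hwinv hmem hdN₁ hdN₂, leibniz_lie,
      lie_lower_lie_raising h hw hwinv hdN₁, lie_zero, add_zero, ← lie_skew N₁, ← weight, neg_lie,
      lie_weight_lie_raising h hw hwinv hmem, neg_neg]
  have lap_eq : lap w winv dd = -(dd * (winv ∘ₗ dd ∘ₗ w) + (winv ∘ₗ dd ∘ₗ w) * dd) := by
    rw [lap, dstar, LinearMap.comp_neg, LinearMap.neg_comp, ← neg_add]
    rfl
  rw [lap_eq]
  exact (commute_mul_add_mul_of_lie_eq hsq hdN₁ lie_conj).neg_left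

end Laplacian

theorem statement15_general {H : Type} [AddCommGroup H] [Module ℝ H]
    {Hgr : ℤ → ℤ → Submodule ℝ H} {N₁ N₂ : H →ₗ[ℝ] H} (hHL : IsHL Hgr N₁ N₂)
    {w : H →ₗ[ℝ] H} (hw : IsW Hgr N₁ N₂ w)
    {winv : H →ₗ[ℝ] H} (hwinv : winv ∘ₗ w = LinearMap.id)
    {dd : H →ₗ[ℝ] H} (hmem : ∀ m n, ∀ x ∈ Hgr m n, dd x ∈ Hgr (m - 1) (n - 1))
    (hsq : dd ∘ₗ dd = 0) (hdN₁ : dd ∘ₗ N₁ = N₁ ∘ₗ dd) (hdN₂ : dd ∘ₗ N₂ = N₂ ∘ₗ dd) :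
    lap w winv dd ∘ₗ N₁ = N₁ ∘ₗ lap w winv dd ∧
    lap w winv dd ∘ₗ N₂ = N₂ ∘ₗ lap w winv dd :=
  ⟨commute_lap_lower hHL hw hwinv hmem hsq hdN₁ hdN₂,
    commute_lap_lower hHL.swap (hw.swap hHL) hwinv (fun m n => hmem n m) hsq hdN₂ hdN₁⟩

end HLS

open HLS in
/-- let `d` be a differential on a polarized bigraded Hodge–Lefschetz
structure `(H, N₁, N₂, ψ)`, with Laplacian `Δ = d d* + d* d`. Then `Δ` commutes with both
monodromy operators: `Δ N₁ = N₁ Δ` and `Δ N₂ = N₂ Δ`. -/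
theorem statement15
    {H : Type} [AddCommGroup H] [Module ℝ H]
    (Hgr : ℤ → ℤ → Submodule ℝ H) (N₁ N₂ : H →ₗ[ℝ] H)
    (hHL : IsHL Hgr N₁ N₂)
    (ψ : H →ₗ[ℝ] H →ₗ[ℝ] ℝ) (hψ : IsPolarization Hgr N₁ N₂ ψ)
    (w : H →ₗ[ℝ] H) (hw : IsW Hgr N₁ N₂ w)
    (winv : H →ₗ[ℝ] H) (hwinv : winv ∘ₗ w = LinearMap.id ∧ w ∘ₗ winv = LinearMap.id)
    (dd : H →ₗ[ℝ] H) (hd : IsDifferential Hgr N₁ N₂ ψ dd) :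
    lap w winv dd ∘ₗ N₁ = N₁ ∘ₗ lap w winv dd ∧
    lap w winv dd ∘ₗ N₂ = N₂ ∘ₗ lap w winv dd := by
  exact statement15_general hHL hw hwinv.1 hd.mem (LinearMap.ext hd.sq) hd.commN₁ hd.commN₂
end
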